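/- Let k ≥ 1 be an integer and x > 0 a real number. Let A be the (k+1)×(k+1) real matrix with rows and columns indexed by 0, 1, …, k, whose (0,0) entry is 1/(3x) and whose (i,j) entry is 1/(i+j+2) for all (i,j) ≠ (0,0). Then det A = (∏_{m=1}^{k−1} m!)² · (∏_{m=4}^{k+2} Γ(m)) / (∏_{m=k+4}^{2k+3} Γ(m)) · [ ((2 − 3x)/(6x)) · Γ(k+3) + 2(k!)²/Γ(k+3) ], where Γ denotes the Gamma function (so Γ(m) = (m−1)! for positive integers m). Consequently, det A ≥ 0 if and only if 0 < x ≤ 2(k+1)²(k+2)² / (3k(k+3)(k²+3k+4)). -/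

import Mathlib

open Finset

noncomputable section

/-- The matrix `A`: its `(0,0)` entry is `1/(3x)` and its `(i,j)` entry is
`1/(i+j+2)` for `(i,j) ≠ (0,0)`. -/
def matA (k : ℕ) (x : ℝ) : Matrix (Fin (k + 1)) (Fin (k + 1)) ℝ :=
  Matrix.of fun i j =>
    if i = 0 ∧ j = 0 then 1 / (3 * x) else 1 / ((i : ℝ) + (j : ℝ) + 2)

/-!
The matrix `A` is the shifted Hilbert matrix `(1 / (i + j + 2))` with its corner changed by
`1 / (3x) - 1 / 2`, so `det A` is the Hilbert determinant plus that multiple of the complementary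
minor, which is again a shifted Hilbert determinant, of entries `1 / (i + j + 4)`. Both are Cauchy
determinants, and their ratio is `2 (k!)² / ((k + 2)!)²`. The minor is positive, so the sign of
`det A` is that of the remaining factor, an affine function of `1 / x`.
-/

open scoped Nat

section Determinant

variable {R : Type*} [CommRing R]

theorem det_add_single {n : Type*} [Fintype n] [DecidableEq n] (M : Matrix n n R) (i j : n)
    (c : R) : (M + Matrix.single i j c).det = M.det + c * M.adjugate j i := by
  have hrow : M + Matrix.single i j c = M.updateRow i (M i + c • Pi.single j 1) := by
    ext p q
    rcases eq_or_ne p i with rfl | hp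
    · simp [Matrix.single_apply, Pi.single_apply, eq_comm]
    · simp [hp, hp.symm]
  rw [hrow, Matrix.det_updateRow_add, Matrix.det_updateRow_smul, Matrix.updateRow_eq_self,
    Matrix.adjugate_apply]

theorem det_vandermonde_succ {n : ℕ} (v : Fin (n + 1) → R) :
    (Matrix.vandermonde v).det =
      (∏ i : Fin n, (v i.succ - v 0)) * (Matrix.vandermonde (v ∘ Fin.succ)).det := by
  simp [Matrix.det_vandermonde, Fin.prod_univ_succ, Fin.prod_Ioi_succ]

theorem det_vandermonde_natCast (n : ℕ) :
    (Matrix.vandermonde fun i : Fin n ↦ (i : R)).det = ∏ m ∈ range n, (m ! : R) := by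
  cases n with
  | zero => simp
  | succ n =>
    rw [Matrix.det_vandermonde_id_eq_superFactorial, ← Nat.prod_range_succ_factorial, Nat.cast_prod]

end Determinant

section Cauchy

variable {K : Type*} [Field K] {n : ℕ}

theorem det_eq_mul_det_schurComplement (M : Matrix (Fin (n + 1)) (Fin (n + 1)) K)
    (hM : M 0 0 ≠ 0) :
    M.det = M 0 0 *
      (Matrix.of fun i j : Fin n ↦ M i.succ j.succ - M i.succ 0 / M 0 0 * M 0 j.succ).det := by
  let c : Fin (n + 1) → K := Fin.cons 0 fun i ↦ M i.succ 0 / M 0 0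
  have helim : M.det = (Matrix.of fun i j ↦ M i j - c i * M 0 j).det :=
    Matrix.det_eq_of_forall_row_eq_smul_add_const c 0 rfl fun i j ↦ by simp [c]
  have hcol (i : Fin n) : M i.succ 0 - c i.succ * M 0 0 = 0 := by simp [c, hM]
  rw [helim, Matrix.det_succ_column_zero, Fin.sum_univ_succ, sum_eq_zero fun i _ ↦ by simp [hcol i],
    add_zero]
  simp [c, Matrix.submatrix]

/-- The Cauchy matrix of the families `a` and `b`, with the sign convention that the entries are
`1 / (a i + b j)` rather than `1 / (a i - b j)`; its determinant is a quotient of products, from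
which the Hilbert determinants are read off. -/
def cauchyMatrix {ι κ : Type*} (a : ι → K) (b : κ → K) : Matrix ι κ K :=
  Matrix.of fun i j ↦ 1 / (a i + b j)

theorem det_cauchyMatrix_succ {a b : Fin (n + 1) → K} (hab : ∀ i j, a i + b j ≠ 0) :
    (cauchyMatrix a b).det = 1 / (a 0 + b 0) *
      (∏ i : Fin n, (a i.succ - a 0) / (a i.succ + b 0)) *
      (∏ j : Fin n, (b j.succ - b 0) / (a 0 + b j.succ)) *
      (cauchyMatrix (a ∘ Fin.succ) (b ∘ Fin.succ)).det := by
  have hschur :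
      (Matrix.of fun i j : Fin n ↦ cauchyMatrix a b i.succ j.succ -
        cauchyMatrix a b i.succ 0 / cauchyMatrix a b 0 0 * cauchyMatrix a b 0 j.succ) =
      Matrix.of fun i j ↦ (a i.succ - a 0) / (a i.succ + b 0) *
        Matrix.of (fun i j ↦ (b j.succ - b 0) / (a 0 + b j.succ) *
          cauchyMatrix (a ∘ Fin.succ) (b ∘ Fin.succ) i j) i j := by
    ext i j
    have hi0 := hab i.succ 0
    have h0j := hab 0 j.succ
    have hij := hab i.succ j.succ
    simp only [cauchyMatrix, Matrix.of_apply, Function.comp_apply]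
    field_simp
    ring
  rw [det_eq_mul_det_schurComplement _ (one_div_ne_zero (hab 0 0)), hschur, Matrix.det_mul_column,
    Matrix.det_mul_row, cauchyMatrix, Matrix.of_apply]
  ring

theorem det_cauchyMatrix {a b : Fin n → K} (hab : ∀ i j, a i + b j ≠ 0) :
    (cauchyMatrix a b).det =
      (Matrix.vandermonde a).det * (Matrix.vandermonde b).det / ∏ i, ∏ j, (a i + b j) := by
  induction n with
  | zero => simp
  | succ n ih =>
    rw [det_cauchyMatrix_succ hab, ih (a := a ∘ Fin.succ) (b := b ∘ Fin.succ) fun i j ↦ hab _ _,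
      det_vandermonde_succ a, det_vandermonde_succ b]
    simp only [Fin.prod_univ_succ, prod_mul_distrib, prod_inv_distrib, Function.comp_apply,
      div_eq_mul_inv, mul_inv]
    ring

end Cauchy

section Hilbert

variable (K : Type*) [Field K]

/-- The `n × n` Hilbert matrix shifted by `c`, with entries `1 / (i + j + c + 1)`; the shift `c = 0`
is the classical Hilbert matrix. The entries of `matA` off the corner are those with `c = 1`, and
its complementary minor has `c = 3`. -/
def shiftedHilbert (c n : ℕ) : Matrix (Fin n) (Fin n) K :=
  cauchyMatrix (fun i ↦ (i : K)) fun j ↦ (j : K) + (c + 1)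

variable {K}

theorem shiftedHilbert_apply (c n : ℕ) (i j : Fin n) :
    shiftedHilbert K c n i j = 1 / ((i : K) + j + c + 1) := by
  simp [shiftedHilbert, cauchyMatrix, add_assoc]

theorem submatrix_succ_shiftedHilbert (c n : ℕ) :
    (shiftedHilbert K c (n + 1)).submatrix Fin.succ Fin.succ = shiftedHilbert K (c + 2) n := by
  ext i j
  rw [Matrix.submatrix_apply, shiftedHilbert_apply, shiftedHilbert_apply]
  push_cast [Fin.val_succ]
  ring

variable [CharZero K]

theorem prod_prod_natCast_add (c n : ℕ) :
    ∏ i : Fin n, ∏ j : Fin n, ((i : K) + (j + (c + 1))) =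
      (∏ m ∈ range n, ((c + n + m)! : K)) / ∏ m ∈ range n, ((c + m)! : K) := by
  rw [← prod_div_distrib, ← Fin.prod_univ_eq_prod_range (fun m ↦ ((c + n + m)! : K) / (c + m)!)]
  refine prod_congr rfl fun i _ ↦ ?_
  have hasc : ∏ j : Fin n, ((i : K) + (j + (c + 1))) = ((c + i + 1).ascFactorial n : ℕ) := by
    rw [Nat.ascFactorial_eq_prod_range, Nat.cast_prod,
      ← Fin.prod_univ_eq_prod_range fun j ↦ ((c + i + 1 + j : ℕ) : K)]
    exact prod_congr rfl fun j _ ↦ by push_cast; ring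
  rw [hasc, eq_div_iff (by exact_mod_cast Nat.factorial_ne_zero _), add_right_comm c n, mul_comm]
  exact_mod_cast Nat.factorial_mul_ascFactorial (c + i) n

theorem det_shiftedHilbert (c n : ℕ) :
    (shiftedHilbert K c n).det =
      (∏ m ∈ range n, (m ! : K)) ^ 2 * (∏ m ∈ range n, ((c + m)! : K)) /
        ∏ m ∈ range n, ((c + n + m)! : K) := by
  have hne (i j : Fin n) : (i : K) + (j + (c + 1)) ≠ 0 := by
    exact_mod_cast (by lia : (i : ℕ) + (j + (c + 1)) ≠ 0)
  rw [shiftedHilbert, det_cauchyMatrix hne, Matrix.det_vandermonde_add, det_vandermonde_natCast,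
    prod_prod_natCast_add, div_div_eq_mul_div, sq]

theorem det_shiftedHilbert_succ (c n : ℕ) :
    (shiftedHilbert K c (n + 1)).det =
      (n ! : K) ^ 2 * c ! * (c + 1)! / ((c + n + 1)! : K) ^ 2 *
        (shiftedHilbert K (c + 2) n).det := by
  have hnum : (∏ m ∈ range (n + 1), ((c + m)! : K)) * (c + n + 1)! =
      c ! * (c + 1)! * ∏ m ∈ range n, ((c + 2 + m)! : K) := by
    rw [add_assoc c n, ← prod_range_succ fun m ↦ ((c + m)! : K), prod_range_succ',
      prod_range_succ']
    have hshift : ∏ m ∈ range n, ((c + (m + 1 + 1))! : K) = ∏ m ∈ range n, ((c + 2 + m)! : K) :=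
      prod_congr rfl fun m _ ↦ by congr 2; ring
    rw [hshift, zero_add, add_zero]
    ring
  have hden : ∏ m ∈ range (n + 1), ((c + (n + 1) + m)! : K) =
      (c + n + 1)! * ∏ m ∈ range n, ((c + 2 + n + m)! : K) := by
    rw [prod_range_succ', mul_comm]
    exact congrArg _ <| prod_congr rfl fun m _ ↦ by congr 2; ring
  have hfact (a : ℕ) : (a ! : K) ≠ 0 := by exact_mod_cast a.factorial_ne_zero
  rw [det_shiftedHilbert, det_shiftedHilbert, eq_div_of_mul_eq (hfact _) hnum, hden,
    prod_range_succ fun m ↦ (m ! : K)]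
  field_simp [hfact]

end Hilbert

theorem det_shiftedHilbert_pos {F : Type*} [Field F] [LinearOrder F] [IsStrictOrderedRing F]
    (c n : ℕ) : 0 < (shiftedHilbert F c n).det := by
  rw [det_shiftedHilbert]
  have hprod (f : ℕ → ℕ) : 0 < ∏ m ∈ range n, ((f m)! : F) :=
    prod_pos fun m _ ↦ by positivity
  exact div_pos (mul_pos (pow_pos (hprod _) 2) (hprod _)) (hprod _)

theorem prod_Icc_Gamma_eq_prod_factorial (a n : ℕ) :
    ∏ m ∈ Icc (a + 1) (a + n), Real.Gamma m = ∏ m ∈ range n, ((a + m)! : ℝ) := by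
  rw [← Ico_succ_right_eq_Icc, prod_Ico_eq_prod_range]
  refine prod_congr (by congr 1; simp) fun m _ ↦ ?_
  rw [← Real.Gamma_nat_eq_factorial]
  push_cast
  ring_nf

theorem det_shiftedHilbert_three {k : ℕ} (hk : 1 ≤ k) :
    (shiftedHilbert ℝ 3 k).det =
      (∏ m ∈ Icc 1 (k - 1), (m ! : ℝ)) ^ 2 * (∏ m ∈ Icc 4 (k + 2), Real.Gamma m) /
        (∏ m ∈ Icc (k + 4) (2 * k + 3), Real.Gamma m) * Real.Gamma (k + 3) := by
  obtain ⟨n, rfl⟩ := Nat.exists_eq_add_of_le' hk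
  have hfact : ∏ m ∈ Icc 1 (n + 1 - 1), (m ! : ℝ) = ∏ m ∈ range (n + 1), (m ! : ℝ) := by
    exact_mod_cast (Nat.prod_Icc_factorial n).trans (Nat.prod_range_succ_factorial n).symm
  have hnum : (∏ m ∈ Icc 4 (n + 1 + 2), Real.Gamma m) * Real.Gamma ((n + 1 : ℕ) + 3) =
      ∏ m ∈ range (n + 1), ((3 + m)! : ℝ) := by
    rw [← prod_Icc_Gamma_eq_prod_factorial, show 3 + (n + 1) = n + 1 + 2 + 1 by ring,
      prod_Icc_succ_top (b := n + 1 + 2) (by lia)]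
    push_cast
    ring_nf
  have hden : ∏ m ∈ Icc (n + 1 + 4) (2 * (n + 1) + 3), Real.Gamma m =
      ∏ m ∈ range (n + 1), ((3 + (n + 1) + m)! : ℝ) := by
    rw [← prod_Icc_Gamma_eq_prod_factorial]
    congr 2 <;> ring
  rw [det_shiftedHilbert, hfact, hden, ← hnum]
  ring

theorem matA_eq_add_single (k : ℕ) (x : ℝ) :
    matA k x = shiftedHilbert ℝ 1 (k + 1) + Matrix.single 0 0 (1 / (3 * x) - 1 / 2) := by
  ext i j
  rw [Matrix.add_apply, shiftedHilbert_apply]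
  by_cases h : i = 0 ∧ j = 0
  · obtain ⟨rfl, rfl⟩ := h
    norm_num [matA]
  · rw [Matrix.single_apply_of_ne (h := fun h0 ↦ h ⟨h0.1.symm, h0.2.symm⟩)]
    simp only [matA, Matrix.of_apply, if_neg h]
    push_cast
    ring

theorem det_matA_eq_mul_det_shiftedHilbert (k : ℕ) {x : ℝ} (hx : x ≠ 0) :
    (matA k x).det = (shiftedHilbert ℝ 3 k).det *
      ((2 - 3 * x) / (6 * x) + 2 * (k ! : ℝ) ^ 2 / ((k + 2)! : ℝ) ^ 2) := by
  have hminor : (shiftedHilbert ℝ 1 (k + 1)).adjugate 0 0 = (shiftedHilbert ℝ 3 k).det := by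
    simp [Matrix.adjugate_fin_succ_eq_det_submatrix, submatrix_succ_shiftedHilbert]
  rw [matA_eq_add_single, det_add_single, hminor, det_shiftedHilbert_succ, add_right_comm 1 k 1]
  simp only [Nat.reduceAdd, add_comm 2 k, Nat.factorial_one, Nat.factorial_two, Nat.cast_one,
    Nat.cast_ofNat]
  field_simp
  ring

theorem det_matA_eq_mul_div_sub (k : ℕ) {x : ℝ} (hx : x ≠ 0) :
    (matA k x).det =
      (shiftedHilbert ℝ 3 k).det / (6 * ((k : ℝ) + 1) ^ 2 * ((k : ℝ) + 2) ^ 2) *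
        (2 * ((k : ℝ) + 1) ^ 2 * ((k : ℝ) + 2) ^ 2 / x -
          3 * (k : ℝ) * ((k : ℝ) + 3) * ((k : ℝ) ^ 2 + 3 * (k : ℝ) + 4)) := by
  have hfact : ((k + 2)! : ℝ) = (k + 2) * ((k + 1) * k !) := by
    rw [Nat.factorial_succ, Nat.factorial_succ]
    push_cast
    ring
  rw [det_matA_eq_mul_det_shiftedHilbert k hx, hfact]
  have h1 : (k : ℝ) + 1 ≠ 0 := by positivity
  have h2 : (k : ℝ) + 2 ≠ 0 := by positivity
  field_simp
  ring

theorem le_div_iff_pos_and_le_div {F : Type*} [Field F] [LinearOrder F] [IsStrictOrderedRing F]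
    {a b x : F} (ha : 0 < a) (hb : 0 ≤ b) : a ≤ b / x ↔ 0 < x ∧ x ≤ b / a := by
  rcases le_or_gt x 0 with hx | hx
  · exact iff_of_false (ha.trans_le' (div_nonpos_of_nonneg_of_nonpos hb hx)).not_ge
      fun h ↦ hx.not_gt h.1
  · simp [hx, le_div_iff₀ hx, le_div_iff₀ ha, mul_comm]

theorem det_matA_nonneg_iff {k : ℕ} (hk : 1 ≤ k) {x : ℝ} (hx : x ≠ 0) :
    0 ≤ (matA k x).det ↔
      (0 < x ∧ x ≤ 2 * ((k : ℝ) + 1) ^ 2 * ((k : ℝ) + 2) ^ 2 /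
        (3 * (k : ℝ) * ((k : ℝ) + 3) * ((k : ℝ) ^ 2 + 3 * (k : ℝ) + 4))) := by
  have hfactor : 0 < (shiftedHilbert ℝ 3 k).det / (6 * ((k : ℝ) + 1) ^ 2 * ((k : ℝ) + 2) ^ 2) :=
    div_pos (det_shiftedHilbert_pos 3 k) (by positivity)
  rw [det_matA_eq_mul_div_sub k hx, mul_nonneg_iff_of_pos_left hfactor, sub_nonneg,
    le_div_iff_pos_and_le_div (by positivity) (by positivity)]

theorem det_matA_general (k : ℕ) (hk : 1 ≤ k) (x : ℝ) (hx : x ≠ 0) :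
    (matA k x).det =
      (∏ m ∈ Icc 1 (k - 1), (m.factorial : ℝ)) ^ 2 *
        (∏ m ∈ Icc 4 (k + 2), Real.Gamma (m : ℝ)) /
        (∏ m ∈ Icc (k + 4) (2 * k + 3), Real.Gamma (m : ℝ)) *
        ((2 - 3 * x) / (6 * x) * Real.Gamma ((k : ℝ) + 3) +
          2 * ((k.factorial : ℝ)) ^ 2 / Real.Gamma ((k : ℝ) + 3)) ∧
    (0 ≤ (matA k x).det ↔
      (0 < x ∧ x ≤ 2 * ((k : ℝ) + 1) ^ 2 * ((k : ℝ) + 2) ^ 2 /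
        (3 * (k : ℝ) * ((k : ℝ) + 3) * ((k : ℝ) ^ 2 + 3 * (k : ℝ) + 4)))) := by
  refine ⟨?_, det_matA_nonneg_iff hk hx⟩
  have hGamma : Real.Gamma (k + 3) = (k + 2)! := by
    rw [← Real.Gamma_nat_eq_factorial]
    push_cast
    ring_nf
  rw [det_matA_eq_mul_det_shiftedHilbert k hx, det_shiftedHilbert_three hk, hGamma]
  field_simp

/-- The determinant formula for `A`, and the consequent positivity criterion. -/
theorem det_matA (k : ℕ) (hk : 1 ≤ k) (x : ℝ) (hx : 0 < x) :
    (matA k x).det =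
      (∏ m ∈ Icc 1 (k - 1), (m.factorial : ℝ)) ^ 2 *
        (∏ m ∈ Icc 4 (k + 2), Real.Gamma (m : ℝ)) /
        (∏ m ∈ Icc (k + 4) (2 * k + 3), Real.Gamma (m : ℝ)) *
        ((2 - 3 * x) / (6 * x) * Real.Gamma ((k : ℝ) + 3) +
          2 * ((k.factorial : ℝ)) ^ 2 / Real.Gamma ((k : ℝ) + 3)) ∧
    (0 ≤ (matA k x).det ↔
      (0 < x ∧ x ≤ 2 * ((k : ℝ) + 1) ^ 2 * ((k : ℝ) + 2) ^ 2 /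
        (3 * (k : ℝ) * ((k : ℝ) + 3) * ((k : ℝ) ^ 2 + 3 * (k : ℝ) + 4)))) :=
  det_matA_general k hk x hx.ne'
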